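/- Let K_{m_1,…,m_p} be the complete multipartite graph with part sizes m_1 ≥ m_2 ≥ … ≥ m_p ≥ 1. Then for every k with 1 ≤ k ≤ p, ϑ_k(K_{m_1,…,m_p}) = m_1 + m_2 + … + m_k. -/

import Mathlib

open Finset

/-- The sum of the `k` largest eigenvalues (counted with multiplicity) of a
Hermitian real matrix, realized as the supremum over all choices of
`min k n` eigenvalues of their sum. -/
noncomputable def sumKEig {V : Type*} [Fintype V] [DecidableEq V] (k : ℕ)
    (A : Matrix V V ℝ) (hA : A.IsHermitian) : ℝ :=
  sSup {x : ℝ | ∃ s : Finset V, s.card = min k (Fintype.card V) ∧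
    x = ∑ i ∈ s, hA.eigenvalues i}

/-- The generalized theta number `ϑ_k(G)`: the infimum of the sum of the `k`
largest eigenvalues over all real symmetric matrices `A` with `A i j = 1`
whenever `(i,j)` is not an edge of `G`. -/
noncomputable def gtheta {V : Type*} [Fintype V] [DecidableEq V]
    (k : ℕ) (G : SimpleGraph V) : ℝ :=
  sInf {x : ℝ | ∃ (A : Matrix V V ℝ) (hA : A.IsHermitian),
    (∀ i j, ¬ G.Adj i j → A i j = 1) ∧ x = sumKEig k A hA}

/-! The lower bound is Ky Fan's inequality: the normalized indicator vectors of `k` disjoint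
independent sets are orthonormal, and on each of them the Rayleigh quotient of an admissible matrix
is the size of the set. Equality is attained by the matrix `A` with `A v w = 1` when `v` and `w` lie
in the same part and `A v w = 0` otherwise, since the normalized part indicators form an orthonormal
system of eigenvectors for all its nonzero eigenvalues, which are the part sizes. Both directions
rest on one fact about weighted sums: with weights in `[0, 1]` of total mass `k`, a weighted sum is
at most the sum of the `k` largest values. -/

open scoped Function

section WeightedSum

variable {ι : Type*} [Fintype ι]

-- `hw` covers both `∑ i, w i = #s` with `t` of any sign and `∑ i, w i ≤ #s` with `0 ≤ t`.
lemma sum_mul_le_sum_of_threshold {f w : ι → ℝ} {s : Finset ι} {t : ℝ}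
    (hts : ∀ i ∈ s, t ≤ f i) (hst : ∀ i ∉ s, f i ≤ t) (hw₀ : ∀ i, 0 ≤ w i) (hw₁ : ∀ i, w i ≤ 1)
    (hw : t * ∑ i, w i ≤ t * #s) : ∑ i, w i * f i ≤ ∑ i ∈ s, f i := by
  classical
  have excess_le (i : ι) : w i * (f i - t) ≤ if i ∈ s then f i - t else 0 := by
    split_ifs with hi
    · exact mul_le_of_le_one_left (sub_nonneg.2 (hts i hi)) (hw₁ i)
    · exact mul_nonpos_of_nonneg_of_nonpos (hw₀ i) (sub_nonpos.2 (hst i hi))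
  have sum_excess_le : ∑ i, w i * (f i - t) ≤ ∑ i ∈ s, (f i - t) := by
    simpa using sum_le_sum fun i (_ : i ∈ univ) ↦ excess_le i
  simp only [mul_sub, sum_sub_distrib, ← sum_mul, sum_const, nsmul_eq_mul] at sum_excess_le
  linarith

lemma exists_card_eq_and_threshold (f : ι → ℝ) {k : ℕ} (hk : k ≤ Fintype.card ι) :
    ∃ (s : Finset ι) (t : ℝ), #s = k ∧ (∀ i ∈ s, t ≤ f i) ∧ ∀ i ∉ s, f i ≤ t := by
  classical
  induction k with
  | zero =>
    obtain ⟨t, ht⟩ := (Set.finite_range f).bddAbove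
    exact ⟨∅, t, card_empty, by simp, fun i _ ↦ ht ⟨i, rfl⟩⟩
  | succ k ih =>
    obtain ⟨s, t, hsk, hts, hst⟩ := ih (by omega)
    have compl_nonempty : sᶜ.Nonempty := by rw [← card_pos, card_compl]; omega
    obtain ⟨a, ha, hmax⟩ := exists_max_image sᶜ f compl_nonempty
    rw [mem_compl] at ha
    refine ⟨insert a s, f a, by rw [card_insert_of_notMem ha, hsk], ?_, fun i hi ↦ ?_⟩
    · exact forall_mem_insert .. |>.2 ⟨le_rfl, fun i hi ↦ (hst a ha).trans (hts i hi)⟩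
    · exact hmax i (mem_compl.2 fun h ↦ hi (mem_insert_of_mem h))

end WeightedSum

lemma sum_sq_inner_le_one_of_orthonormal {ι E : Type*} [NormedAddCommGroup E]
    [InnerProductSpace ℝ E] {u : ι → E} (hu : Orthonormal ℝ u) (s : Finset ι) {x : E}
    (hx : ‖x‖ = 1) : ∑ i ∈ s, inner ℝ (u i) x ^ 2 ≤ 1 := by
  simpa [hx] using hu.sum_inner_products_le x (s := s)

section SumKEig

variable {V : Type*} [Fintype V] [DecidableEq V] {A : Matrix V V ℝ}

lemma toEuclideanLin_eigenvectorBasis (hA : A.IsHermitian) (j : V) :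
    A.toEuclideanLin (hA.eigenvectorBasis j) = hA.eigenvalues j • hA.eigenvectorBasis j := by
  rw [Matrix.toLpLin_apply, hA.mulVec_eigenvectorBasis]
  rfl

lemma inner_toEuclideanLin_eigenvectorBasis_self (hA : A.IsHermitian) (j : V) :
    inner ℝ (hA.eigenvectorBasis j) (A.toEuclideanLin (hA.eigenvectorBasis j)) =
      hA.eigenvalues j := by
  rw [toEuclideanLin_eigenvectorBasis, real_inner_smul_right, real_inner_self_eq_norm_sq,
    hA.eigenvectorBasis.norm_eq_one, one_pow, mul_one]

lemma inner_toEuclideanLin_self_eq_sum (hA : A.IsHermitian) (x : EuclideanSpace ℝ V) :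
    inner ℝ x (A.toEuclideanLin x) =
      ∑ j, inner ℝ (hA.eigenvectorBasis j) x ^ 2 * hA.eigenvalues j := by
  rw [← hA.eigenvectorBasis.sum_inner_mul_inner]
  refine sum_congr rfl fun j _ ↦ ?_
  rw [← Matrix.isSymmetric_toEuclideanLin_iff.2 hA, toEuclideanLin_eigenvectorBasis,
    real_inner_smul_left, real_inner_comm x]
  ring

lemma sumKEig_min_card (k : ℕ) (hA : A.IsHermitian) :
    sumKEig (min k (Fintype.card V)) A hA = sumKEig k A hA := by
  simp only [sumKEig, min_assoc, min_self]

lemma sum_eigenvalues_le_sumKEig (hA : A.IsHermitian) (s : Finset V) :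
    ∑ i ∈ s, hA.eigenvalues i ≤ sumKEig #s A hA := by
  refine le_csSup (Set.Finite.bddAbove ?_) ⟨s, (min_eq_left (card_le_univ s)).symm, rfl⟩
  refine (Set.finite_range fun s : Finset V ↦ ∑ i ∈ s, hA.eigenvalues i).subset ?_
  rintro _ ⟨s, -, rfl⟩
  exact ⟨s, rfl⟩

lemma sumKEig_le {k : ℕ} (hA : A.IsHermitian) {b : ℝ}
    (hb : ∀ s : Finset V, #s ≤ k → ∑ i ∈ s, hA.eigenvalues i ≤ b) : sumKEig k A hA ≤ b := by
  refine csSup_le ?_ ?_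
  · obtain ⟨s, -, hs⟩ := exists_subset_card_eq (s := (univ : Finset V)) (min_le_right k _)
    exact ⟨_, s, hs, rfl⟩
  · rintro _ ⟨s, hs, rfl⟩
    exact hb s (hs.trans_le (min_le_left _ _))

variable {ι : Type*} [Fintype ι] {u : ι → EuclideanSpace ℝ V}

lemma sum_inner_toEuclideanLin_le_sumKEig (hA : A.IsHermitian) (hu : Orthonormal ℝ u) :
    ∑ i, inner ℝ (u i) (A.toEuclideanLin (u i)) ≤ sumKEig (Fintype.card ι) A hA := by
  have card_le : Fintype.card ι ≤ Fintype.card V := by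
    simpa using hu.linearIndependent.fintype_card_le_finrank
  obtain ⟨s, t, hs, hts, hst⟩ := exists_card_eq_and_threshold hA.eigenvalues card_le
  let w (j : V) : ℝ := ∑ i, inner ℝ (hA.eigenvectorBasis j) (u i) ^ 2
  have w_le_one (j : V) : w j ≤ 1 := by
    simpa only [w, real_inner_comm] using
      sum_sq_inner_le_one_of_orthonormal hu univ (hA.eigenvectorBasis.norm_eq_one j)
  have sum_w : ∑ j, w j = #s := by
    simp only [w]
    rw [sum_comm]
    simp [hA.eigenvectorBasis.sum_sq_inner_right, hu.norm_eq_one, hs]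
  calc ∑ i, inner ℝ (u i) (A.toEuclideanLin (u i))
      = ∑ j, w j * hA.eigenvalues j := by
        simp only [inner_toEuclideanLin_self_eq_sum hA, w, sum_mul]
        exact sum_comm
    _ ≤ ∑ j ∈ s, hA.eigenvalues j :=
        sum_mul_le_sum_of_threshold hts hst (fun j ↦ sum_nonneg fun i _ ↦ sq_nonneg _) w_le_one
          (by rw [sum_w])
    _ ≤ sumKEig (Fintype.card ι) A hA := hs ▸ sum_eigenvalues_le_sumKEig hA s

lemma sum_diag_le_sumKEig (hA : A.IsHermitian) (s : Finset V) :
    ∑ v ∈ s, A v v ≤ sumKEig #s A hA := by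
  have basis_orthonormal : Orthonormal ℝ fun v : s ↦ EuclideanSpace.basisFun V ℝ v.1 :=
    (EuclideanSpace.basisFun V ℝ).orthonormal.comp _ Subtype.val_injective
  have inner_basis (v : V) : inner ℝ (EuclideanSpace.basisFun V ℝ v)
      (A.toEuclideanLin (EuclideanSpace.basisFun V ℝ v)) = A v v := by
    simp [Matrix.toLpLin_apply, EuclideanSpace.inner_single_left]
  simpa only [inner_basis, sum_coe_sort s fun v ↦ A v v, Fintype.card_coe] using
    sum_inner_toEuclideanLin_le_sumKEig hA basis_orthonormal

lemma sumKEig_nonneg_of_diag_nonneg (k : ℕ) (hA : A.IsHermitian) (hdiag : ∀ v, 0 ≤ A v v) :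
    0 ≤ sumKEig k A hA := by
  obtain ⟨s, -, hs⟩ := exists_subset_card_eq (s := (univ : Finset V)) (min_le_right k _)
  rw [← sumKEig_min_card, ← card_univ, ← hs]
  exact (sum_nonneg fun v _ ↦ hdiag v).trans (sum_diag_le_sumKEig hA s)

lemma sumKEig_le_sum_of_inner_toEuclideanLin_le (hA : A.IsHermitian) (hu : Orthonormal ℝ u)
    {c : ι → ℝ} (hAc : ∀ x, inner ℝ x (A.toEuclideanLin x) ≤ ∑ i, inner ℝ (u i) x ^ 2 * c i)
    {s : Finset ι} {t : ℝ} (ht : 0 ≤ t) (hts : ∀ i ∈ s, t ≤ c i) (hst : ∀ i ∉ s, c i ≤ t) :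
    sumKEig #s A hA ≤ ∑ i ∈ s, c i := by
  classical
  refine sumKEig_le hA fun r hr ↦ ?_
  let w (i : ι) : ℝ := ∑ j ∈ r, inner ℝ (u i) (hA.eigenvectorBasis j) ^ 2
  have w_le_one (i : ι) : w i ≤ 1 := by
    simpa only [w, real_inner_comm] using
      sum_sq_inner_le_one_of_orthonormal hA.eigenvectorBasis.orthonormal r (hu.norm_eq_one i)
  have sum_w_le : ∑ i, w i ≤ #s := by
    calc ∑ i, w i = ∑ j ∈ r, ∑ i, inner ℝ (u i) (hA.eigenvectorBasis j) ^ 2 := sum_comm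
      _ ≤ ∑ j ∈ r, 1 := sum_le_sum fun j _ ↦
          sum_sq_inner_le_one_of_orthonormal hu univ (hA.eigenvectorBasis.norm_eq_one j)
      _ ≤ #s := by simpa using hr
  calc ∑ j ∈ r, hA.eigenvalues j
      ≤ ∑ j ∈ r, ∑ i, inner ℝ (u i) (hA.eigenvectorBasis j) ^ 2 * c i := sum_le_sum fun j _ ↦
        inner_toEuclideanLin_eigenvectorBasis_self hA j ▸ hAc (hA.eigenvectorBasis j)
    _ = ∑ i, w i * c i := by
        simp only [w, sum_mul]
        exact sum_comm
    _ ≤ ∑ i ∈ s, c i :=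
        sum_mul_le_sum_of_threshold hts hst (fun i ↦ sum_nonneg fun j _ ↦ sq_nonneg _) w_le_one
          (mul_le_mul_of_nonneg_left sum_w_le ht)

end SumKEig

section UnitIndicator

variable {V : Type*} [DecidableEq V]

/-- The indicator vector of a finite set of coordinates, scaled to have Euclidean norm one. It is
the zero vector when the set is empty. -/
noncomputable def unitIndicator (s : Finset V) : EuclideanSpace ℝ V :=
  WithLp.toLp 2 fun v ↦ if v ∈ s then (√(#s))⁻¹ else 0

lemma unitIndicator_apply (s : Finset V) (v : V) :
    unitIndicator s v = if v ∈ s then (√(#s))⁻¹ else 0 := rfl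

variable [Fintype V]

lemma inner_unitIndicator (s : Finset V) (x : EuclideanSpace ℝ V) :
    inner ℝ (unitIndicator s) x = (√(#s))⁻¹ * ∑ v ∈ s, x v := by
  simp [PiLp.inner_apply, unitIndicator_apply, mul_comm, sum_mul]

lemma sq_inner_unitIndicator_mul_card (s : Finset V) (x : EuclideanSpace ℝ V) :
    inner ℝ (unitIndicator s) x ^ 2 * #s = (∑ v ∈ s, x v) ^ 2 := by
  obtain rfl | hs := s.eq_empty_or_nonempty
  · simp
  · have card_ne_zero : (#s : ℝ) ≠ 0 := by exact_mod_cast hs.card_ne_zero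
    rw [inner_unitIndicator, mul_pow, inv_pow, Real.sq_sqrt (Nat.cast_nonneg _)]
    field_simp

lemma orthonormal_unitIndicator {ι : Type*} {I : ι → Finset V} (hne : ∀ i, (I i).Nonempty)
    (hdisj : Pairwise (Disjoint on I)) : Orthonormal ℝ fun i ↦ unitIndicator (I i) := by
  classical
  rw [orthonormal_iff_ite]
  intro i j
  rw [inner_unitIndicator]
  split_ifs with hij
  · subst hij
    have sqrt_ne_zero : √(#(I i)) ≠ 0 := by simpa using (hne i).ne_empty
    calc (√(#(I i)))⁻¹ * ∑ v ∈ I i, unitIndicator (I i) v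
        = (√(#(I i)))⁻¹ * (#(I i) / √(#(I i))) := by
          simp [unitIndicator_apply, sum_ite_mem, div_eq_mul_inv]
      _ = 1 := by rw [Real.div_sqrt, inv_mul_cancel₀ sqrt_ne_zero]
  · simp [unitIndicator_apply, sum_ite_mem, disjoint_iff_inter_eq_empty.1 (hdisj hij)]

lemma inner_toEuclideanLin_unitIndicator {A : Matrix V V ℝ} {s : Finset V}
    (hA : ∀ v ∈ s, ∀ w ∈ s, A v w = 1) :
    inner ℝ (unitIndicator s) (A.toEuclideanLin (unitIndicator s)) = #s := by
  have apply_eq (v : V) (hv : v ∈ s) : A.toEuclideanLin (unitIndicator s) v = √(#s) := by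
    calc A.toEuclideanLin (unitIndicator s) v
        = ∑ w ∈ s, A v w * (√(#s))⁻¹ := by
          simp [Matrix.toLpLin_apply, Matrix.mulVec, dotProduct, unitIndicator_apply]
      _ = √(#s) := by
          rw [sum_congr rfl fun w hw ↦ by rw [hA v hv w hw, one_mul], sum_const, nsmul_eq_mul,
            ← div_eq_mul_inv, Real.div_sqrt]
  rw [inner_unitIndicator, sum_congr rfl apply_eq, sum_const, nsmul_eq_mul, ← mul_assoc,
    inv_mul_eq_div, Real.div_sqrt, Real.mul_self_sqrt (Nat.cast_nonneg _)]

end UnitIndicator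

section Gtheta

variable {V : Type*} [Fintype V] [DecidableEq V] {G : SimpleGraph V}

lemma sum_card_le_sumKEig {ι : Type*} [Fintype ι] {I : ι → Finset V}
    (hne : ∀ i, (I i).Nonempty) (hdisj : Pairwise (Disjoint on I))
    (hind : ∀ i, G.IsIndepSet (I i)) {A : Matrix V V ℝ} (hA : A.IsHermitian)
    (hAG : ∀ v w, ¬ G.Adj v w → A v w = 1) :
    ∑ i, (#(I i) : ℝ) ≤ sumKEig (Fintype.card ι) A hA := by
  have eq_one (i : ι) : ∀ v ∈ I i, ∀ w ∈ I i, A v w = 1 := fun v hv w hw ↦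
    hAG v w fun h ↦ hind i hv hw h.ne h
  calc ∑ i, (#(I i) : ℝ)
      = ∑ i, inner ℝ (unitIndicator (I i)) (A.toEuclideanLin (unitIndicator (I i))) :=
        sum_congr rfl fun i _ ↦ (inner_toEuclideanLin_unitIndicator (eq_one i)).symm
    _ ≤ sumKEig (Fintype.card ι) A hA :=
        sum_inner_toEuclideanLin_le_sumKEig hA (orthonormal_unitIndicator hne hdisj)

lemma gtheta_le_sumKEig (k : ℕ) {A : Matrix V V ℝ} (hA : A.IsHermitian)
    (hAG : ∀ v w, ¬ G.Adj v w → A v w = 1) : gtheta k G ≤ sumKEig k A hA := by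
  refine csInf_le ⟨0, ?_⟩ ⟨A, hA, hAG, rfl⟩
  rintro _ ⟨B, hB, hBG, rfl⟩
  exact sumKEig_nonneg_of_diag_nonneg k hB fun v ↦ by simp [hBG v v (G.loopless.irrefl v)]

lemma le_gtheta {k : ℕ} {b : ℝ} (hb : ∀ (A : Matrix V V ℝ) (hA : A.IsHermitian),
    (∀ v w, ¬ G.Adj v w → A v w = 1) → b ≤ sumKEig k A hA) : b ≤ gtheta k G := by
  refine le_csInf ⟨_, Matrix.of fun _ _ ↦ 1, by ext; simp, fun _ _ _ ↦ rfl, rfl⟩ ?_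
  rintro _ ⟨A, hA, hAG, rfl⟩
  exact hb A hA hAG

theorem sum_card_le_gtheta {ι : Type*} [Fintype ι] {I : ι → Finset V}
    (hne : ∀ i, (I i).Nonempty) (hdisj : Pairwise (Disjoint on I))
    (hind : ∀ i, G.IsIndepSet (I i)) :
    ∑ i, (#(I i) : ℝ) ≤ gtheta (Fintype.card ι) G :=
  le_gtheta fun _ hA hAG ↦ sum_card_le_sumKEig hne hdisj hind hA hAG

end Gtheta

section FiberMatrix

variable {V ι : Type*} [DecidableEq ι]

/-- The block matrix with all-ones diagonal blocks and zeros elsewhere, the blocks being the fibers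
of `f`. It attains the theta number of the complete multipartite graph whose parts are the
fibers. -/
def fiberMatrix (f : V → ι) : Matrix V V ℝ :=
  Matrix.of fun v w ↦ if f v = f w then 1 else 0

lemma fiberMatrix_apply (f : V → ι) (v w : V) :
    fiberMatrix f v w = if f v = f w then 1 else 0 := rfl

lemma isHermitian_fiberMatrix (f : V → ι) : (fiberMatrix f).IsHermitian := by
  ext v w
  simp [fiberMatrix_apply, eq_comm]

variable [Fintype V]

lemma pairwise_disjoint_filter_eq (f : V → ι) :
    Pairwise (Disjoint on fun i ↦ ({v | f v = i} : Finset V)) :=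
  Set.pairwise_univ.1 (Set.pairwiseDisjoint_filter f Set.univ univ)

variable [DecidableEq V]

lemma inner_toEuclideanLin_fiberMatrix_self [Fintype ι] (f : V → ι) (x : EuclideanSpace ℝ V) :
    inner ℝ x ((fiberMatrix f).toEuclideanLin x) =
      ∑ i, inner ℝ (unitIndicator {v | f v = i}) x ^ 2 * #{v | f v = i} := by
  have apply_eq (v : V) : (fiberMatrix f).toEuclideanLin x v = ∑ w with f w = f v, x w := by
    simp [Matrix.toLpLin_apply, Matrix.mulVec, dotProduct, fiberMatrix_apply, sum_filter,
      eq_comm]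
  calc inner ℝ x ((fiberMatrix f).toEuclideanLin x)
      = ∑ v, (∑ w with f w = f v, x w) * x v := by
        simp only [PiLp.inner_apply, RCLike.inner_apply, conj_trivial, apply_eq]
    _ = ∑ i, ∑ v with f v = i, (∑ w with f w = f v, x w) * x v := (sum_fiberwise ..).symm
    _ = ∑ i, (∑ v with f v = i, x v) ^ 2 := by
        refine sum_congr rfl fun i _ ↦ ?_
        rw [sq, mul_sum]
        exact sum_congr rfl fun v hv ↦ by rw [(mem_filter.1 hv).2]
    _ = ∑ i, inner ℝ (unitIndicator {v | f v = i}) x ^ 2 * #{v | f v = i} := by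
        simp only [sq_inner_unitIndicator_mul_card]

theorem gtheta_le_sum_card_fiber {G : SimpleGraph V} {f : V → ι} (hf : f.Surjective)
    (hG : ∀ v w, f v ≠ f w → G.Adj v w) {s : Finset ι}
    (hs : ∀ i ∈ s, ∀ j ∉ s, #{v | f v = j} ≤ #{v | f v = i}) :
    gtheta #s G ≤ ∑ i ∈ s, (#{v | f v = i} : ℝ) := by
  have : Fintype ι := Fintype.ofSurjective f hf
  have fiberMatrix_eq_one (v w : V) (hvw : ¬ G.Adj v w) : fiberMatrix f v w = 1 :=
    if_pos (not_imp_comm.1 (hG v w) hvw)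
  have fiber_nonempty (i : ι) : ({v | f v = i} : Finset V).Nonempty :=
    (hf i).imp fun v hv ↦ by simpa using hv
  refine (gtheta_le_sumKEig _ (isHermitian_fiberMatrix f) fiberMatrix_eq_one).trans ?_
  refine sumKEig_le_sum_of_inner_toEuclideanLin_le _
    (orthonormal_unitIndicator fiber_nonempty (pairwise_disjoint_filter_eq f))
    (fun x ↦ (inner_toEuclideanLin_fiberMatrix_self f x).le)
    (t := (sᶜ.sup fun j ↦ #{v | f v = j} : ℕ)) (Nat.cast_nonneg _) (fun i hi ↦ ?_) fun j hj ↦ ?_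
  · exact_mod_cast Finset.sup_le fun j hj ↦ hs i hi j (mem_compl.1 hj)
  · exact_mod_cast le_sup (f := fun j ↦ #{v | f v = j}) (mem_compl.2 hj)

end FiberMatrix

theorem stmt_8_general {ι : Type*} [Fintype ι] [DecidableEq ι] (V : ι → Type*)
    [∀ i, Fintype (V i)] [∀ i, DecidableEq (V i)] [∀ i, Nonempty (V i)] {s : Finset ι} {k : ℕ}
    (hsk : #s = k) (hs : ∀ i ∈ s, ∀ j ∉ s, Fintype.card (V j) ≤ Fintype.card (V i)) :
    gtheta k (SimpleGraph.completeMultipartiteGraph V) = ∑ i ∈ s, (Fintype.card (V i) : ℝ) := by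
  subst hsk
  have card_part (i : ι) : #{v : Σ i, V i | v.1 = i} = Fintype.card (V i) := by
    rw [← Fintype.card_subtype, Fintype.card_congr (Equiv.sigmaSubtype i)]
  have part_nonempty (i : ι) : ({v : Σ i, V i | v.1 = i} : Finset _).Nonempty := by
    rw [← card_pos, card_part]
    exact Fintype.card_pos
  apply le_antisymm
  · simpa only [card_part] using gtheta_le_sum_card_fiber
      (G := SimpleGraph.completeMultipartiteGraph V) (f := Sigma.fst) (s := s)
      Sigma.fst_surjective (fun _ _ h ↦ h) (by simpa only [card_part] using hs)
  · have sum_le := sum_card_le_gtheta (G := SimpleGraph.completeMultipartiteGraph V)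
      (I := fun i : s ↦ {v | v.1 = i.1}) (fun i ↦ part_nonempty i)
      ((pairwise_disjoint_filter_eq Sigma.fst).comp_of_injective Subtype.val_injective)
      (fun i v hv w hw _ ↦ by simp_all)
    simp only [card_part, Fintype.card_coe] at sum_le
    rwa [sum_coe_sort s fun i ↦ (Fintype.card (V i) : ℝ)] at sum_le

theorem stmt_8 (p : ℕ) (m : Fin p → ℕ) (hm : ∀ i, 1 ≤ m i)
    (hmono : Antitone m) (k : ℕ) (hk1 : 1 ≤ k) (hkp : k ≤ p) :
    gtheta k (SimpleGraph.completeMultipartiteGraph (fun i : Fin p => Fin (m i))) =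
      ∑ i ∈ Finset.univ.filter (fun i : Fin p => i.val < k), (m i : ℝ) := by
  have (i : Fin p) : Nonempty (Fin (m i)) := ⟨⟨0, hm i⟩⟩
  have card_eq : #{i : Fin p | i.val < k} = k := by rw [Fin.card_filter_val_lt, min_eq_right hkp]
  simpa only [Fintype.card_fin] using stmt_8_general (fun i ↦ Fin (m i)) card_eq fun i hi j hj ↦ by
    simp only [mem_filter_univ] at hi hj
    simpa only [Fintype.card_fin] using hmono (by omega)
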